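/- arXiv:1904.08969 — 2 statements merged into one kernel-verified Lean document; each statement's English description precedes it below -/
import Mathlib

section
/- Let X be a functionally Hausdorff space which is a continuous image of a Čech-complete space P with l(P) < 𝔠. Then the following are equivalent: (i) every compact subset of X is scattered; (ii) for every continuous map f : X → Y to a functionally Hausdorff space Y, the image f(X) has cardinality at most max{l(P), ψ(Y)}; (iii) no continuous map f : X → [0,1] is surjective. -/
open Cardinal Set Topology

universe u

def FunctionallyHausdorff (X : Type u) [TopologicalSpace X] : Prop :=
  ∀ x y : X, x ≠ y → ∃ f : X → unitInterval, Continuous f ∧ f x = 0 ∧ f y = 1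

def IsCechComplete (X : Type u) [TopologicalSpace X] : Prop :=
  ∃ (K : Type u) (_ : TopologicalSpace K) (e : X → K),
    CompactSpace K ∧ T2Space K ∧ IsEmbedding e ∧ DenseRange e ∧ IsGδ (Set.range e)

noncomputable def lindelofNumber (X : Type u) [TopologicalSpace X] : Cardinal.{u} :=
  sInf {κ : Cardinal.{u} | ℵ₀ ≤ κ ∧ ∀ U : Set (Set X), (∀ u ∈ U, IsOpen u) → ⋃₀ U = Set.univ →
    ∃ V ⊆ U, #↥V ≤ κ ∧ ⋃₀ V = Set.univ}

noncomputable def pseudocharacter (X : Type u) [TopologicalSpace X] : Cardinal.{u} :=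
  sInf {κ : Cardinal.{u} | ℵ₀ ≤ κ ∧ ∀ x : X, ∃ 𝒰 : Set (Set X),
    #↥𝒰 ≤ κ ∧ (∀ U ∈ 𝒰, IsOpen U ∧ x ∈ U) ∧ ⋂₀ 𝒰 = ⋂₀ {U : Set X | IsOpen U ∧ x ∈ U}}

def IsScatteredSet {X : Type u} [TopologicalSpace X] (S : Set X) : Prop :=
  ∀ T ⊆ S, T.Nonempty → ∃ x ∈ T, ∃ U : Set X, IsOpen U ∧ U ∩ T = {x}

def IsKAnalytic (X : Type u) [TopologicalSpace X] : Prop :=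
  ∃ (P : Type u) (_ : TopologicalSpace P) (f : P → X),
    LindelofSpace P ∧ IsCechComplete P ∧ Continuous f ∧ Function.Surjective f

def IsAnalyticSpace (X : Type u) [TopologicalSpace X] : Prop :=
  ∃ (P : Type u) (_ : TopologicalSpace P), PolishSpace P ∧
    ∃ f : P → X, Continuous f ∧ Function.Surjective f

noncomputable def boundingNumber : Cardinal.{0} :=
  sInf {κ : Cardinal.{0} | ∃ B : Set (ℕ → ℕ), #↥B = κ ∧
    ∀ y : ℕ → ℕ, ∃ x ∈ B, {n : ℕ | ¬ x n ≤ y n}.Infinite}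

/-
A large closed subset of the Čech-complete space splits into two smaller large closed sets, with
disjoint images in the functionally Hausdorff target. Iterating, one obtains a binary tree of closed
sets whose set of branches is compact, by Čech-completeness; sending a branch to its sequence of
digits and the Cantor set onto `[0, 1]` gives a map on a compact set, which the Tietze theorem
extends to the target. For (i) ⇒ (ii), large sets are those whose image has cardinality greater than
`κ`; for (iii) ⇒ (i), they are the nonempty perfect sets. Conversely, a compact set mapped onto
`[0, 1]` contains a minimal compact set mapped onto `[0, 1]`, and this one has no isolated points.
-/

universe v

namespace FunctionallyHausdorff

theorem injective_eval {Y : Type u} [TopologicalSpace Y] (hY : FunctionallyHausdorff Y) :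
    Function.Injective fun (y : Y) (f : C(Y, unitInterval)) => f y := by
  intro x y hxy
  by_contra hne
  obtain ⟨f, hf, hx, hy⟩ := hY x y hne
  exact zero_ne_one (hx.symm.trans ((congrFun hxy ⟨f, hf⟩).trans hy))

theorem t25Space {Y : Type u} [TopologicalSpace Y] (hY : FunctionallyHausdorff Y) : T25Space Y :=
  .of_injective_continuous hY.injective_eval (by fun_prop)

theorem exists_continuous_comp_eq {Y : Type u} {Z : Type*} {W : Type v}
    [TopologicalSpace Y] [TopologicalSpace Z] [CompactSpace Z] [TopologicalSpace W]
    [TietzeExtension.{u, v} W]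
    (hY : FunctionallyHausdorff Y) {π : Z → Y} (hπ : Continuous π) {f : Z → W}
    (hf : Continuous f) (hfac : f.FactorsThrough π) :
    ∃ φ : Y → W, Continuous φ ∧ φ ∘ π = f := by
  let ev : C(Y, C(Y, unitInterval) → unitInterval) := ⟨fun y f => f y, by fun_prop⟩
  let q : C(Z, range (ev ∘ π)) := ⟨rangeFactorization (ev ∘ π), by fun_prop⟩
  have hq : IsQuotientMap q :=
    .of_surjective_continuous rangeFactorization_surjective q.continuous
  have hfq : Function.FactorsThrough f q := fun a b hab =>
    hfac (hY.injective_eval (congrArg Subtype.val hab))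
  have hclosed : IsClosed (range (ev ∘ π)) :=
    (isCompact_range (ev.continuous.comp hπ)).isClosed
  obtain ⟨g, hg⟩ := (hq.lift ⟨f, hf⟩ hfq).exists_restrict_eq hclosed
  refine ⟨g ∘ ev, g.continuous.comp ev.continuous, funext fun z => ?_⟩
  calc g (ev (π z)) = hq.lift ⟨f, hf⟩ hfq (q z) := DFunLike.congr_fun hg (q z)
    _ = f z := DFunLike.congr_fun (hq.lift_comp ⟨f, hf⟩ hfq) z

theorem of_t35Space (Y : Type u) [TopologicalSpace Y] [T35Space Y] : FunctionallyHausdorff Y := by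
  intro x y hxy
  obtain ⟨f, hf, hx, hy⟩ :=
    CompletelyRegularSpace.completely_regular x {y} isClosed_singleton hxy
  exact ⟨f, hf, hx, hy rfl⟩

end FunctionallyHausdorff

/-- A sequence of families of sets is complete if every ultrafilter that meets all the families
converges. By Frolík's theorem, a Tychonoff space is Čech-complete iff it has a complete sequence of
open covers; here the families are not required to be covers. -/
def IsCompleteSequence {P : Type*} [TopologicalSpace P] (𝒮 : ℕ → Set (Set P)) : Prop :=
  ∀ 𝒰 : Ultrafilter P, (∀ n, ∃ A ∈ 𝒮 n, A ∈ 𝒰) → ∃ p, (𝒰 : Filter P) ≤ 𝓝 p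

theorem isCompleteSequence_of_isCompact {P : Type*} [TopologicalSpace P] {K : Set P}
    (hK : IsCompact K) : IsCompleteSequence fun _ => {K} := by
  intro 𝒰 h𝒰
  obtain ⟨_, rfl, hmem⟩ := h𝒰 0
  obtain ⟨p, -, hp⟩ := isCompact_iff_ultrafilter_le_nhds'.1 hK 𝒰 hmem
  exact ⟨p, hp⟩

theorem IsCechComplete.exists_isCompleteSequence {P : Type u} [TopologicalSpace P]
    (hP : IsCechComplete P) :
    ∃ 𝒮 : ℕ → Set (Set P), IsCompleteSequence 𝒮 ∧
      ∀ n p, ∃ M ∈ 𝒮 n, IsClosed M ∧ M ∈ 𝓝 p := by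
  obtain ⟨K, _, e, _, _, he, -, hGδ⟩ := hP
  obtain ⟨O, hO, hrange⟩ := isGδ_iff_eq_iInter_nat.1 hGδ
  refine ⟨fun n => {A | ∃ M, IsClosed M ∧ M ⊆ O n ∧ e ⁻¹' M = A}, fun 𝒰 h𝒰 => ?_, fun n p => ?_⟩
  · obtain ⟨k, hk⟩ : ∃ k, (𝒰.map e : Filter K) ≤ 𝓝 k := ⟨_, (𝒰.map e).le_nhds_lim⟩
    have hkO : ∀ n, k ∈ O n := by
      intro n
      obtain ⟨_, ⟨M, hM, hMO, rfl⟩, hmem⟩ := h𝒰 n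
      exact hMO (hM.mem_of_tendsto hk hmem)
    obtain ⟨p, rfl⟩ : k ∈ range e := hrange ▸ mem_iInter.2 hkO
    exact ⟨p, he.isInducing.nhds_eq_comap p ▸ Filter.map_le_iff_le_comap.1 hk⟩
  · have hp : e p ∈ O n := mem_iInter.1 (hrange ▸ mem_range_self p) n
    obtain ⟨M, hMp, hM, hMO⟩ := exists_mem_nhds_isClosed_subset ((hO n).mem_nhds hp)
    exact ⟨e ⁻¹' M, ⟨M, hM, hMO, rfl⟩, hM.preimage he.continuous, he.continuous.continuousAt hMp⟩

theorem IsCompleteSequence.nonempty_iInter {P : Type*} [TopologicalSpace P]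
    {𝒮 : ℕ → Set (Set P)} (h𝒮 : IsCompleteSequence 𝒮) {F : ℕ → Set P} (hF : Antitone F)
    (hclosed : ∀ n, IsClosed (F n)) (hne : ∀ n, (F n).Nonempty)
    (hsmall : ∀ n, ∃ M ∈ 𝒮 n, ∃ m, F m ⊆ M) : (⋂ n, F n).Nonempty := by
  have : (⨅ n, Filter.principal (F n)).NeBot :=
    Filter.iInf_neBot_of_directed' (directed_of_isDirected_le fun _ _ h =>
      Filter.principal_mono.2 (hF h)) fun n => Filter.principal_neBot_iff.2 (hne n)
  let 𝒰 := Ultrafilter.of (⨅ n, Filter.principal (F n))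
  have hmem : ∀ n, F n ∈ 𝒰 := fun n =>
    Ultrafilter.of_le _ (Filter.mem_iInf_of_mem n (Filter.mem_principal_self _))
  obtain ⟨p, hp⟩ := h𝒮 𝒰 fun n =>
    let ⟨M, hM, m, hmM⟩ := hsmall n
    ⟨M, hM, Filter.mem_of_superset (hmem m) hmM⟩
  exact ⟨p, mem_iInter.2 fun n => (hclosed n).mem_of_tendsto hp (hmem n)⟩

theorem eq_of_forall_mem_res {α β : Type*} {A : List β → Set α} (hA : CantorScheme.Disjoint A)
    {x y : ℕ → β} {a : α} (hx : ∀ n, a ∈ A (PiNat.res x n)) (hy : ∀ n, a ∈ A (PiNat.res y n)) :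
    x = y := by
  refine PiNat.res_injective (funext fun n => ?_)
  induction n with
  | zero => rfl
  | succ n ih =>
    simp only [PiNat.res_succ, List.cons.injEq]
    refine ⟨?_, ih⟩
    by_contra hne
    exact (hA (PiNat.res x n) hne).ne_of_mem (hx (n + 1)) (ih ▸ hy (n + 1)) rfl

/-- The pairs of a branch of the scheme `A` and a point lying in all the sets along that branch. It
serves as the domain of the map to be extended, since a choice of one point on each
branch need not be continuous. -/
def branchGraph {α β : Type*} (A : List β → Set α) : Set ((ℕ → β) × α) :=
  {z | ∀ n, z.2 ∈ A (PiNat.res z.1 n)}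

section Scheme

variable {P : Type*} [TopologicalSpace P] {𝒮 : ℕ → Set (Set P)}

theorem isCompact_branchGraph {β : Type*} [Finite β] [TopologicalSpace β] [DiscreteTopology β]
    (h𝒮 : IsCompleteSequence 𝒮) {A : List β → Set P} (hclosed : ∀ l, IsClosed (A l))
    (hsmall : ∀ l b, ∃ M ∈ 𝒮 l.length, A (b :: l) ⊆ M) : IsCompact (branchGraph A) := by
  refine isCompact_iff_ultrafilter_le_nhds'.2 fun 𝒰 h𝒰 => ?_
  obtain ⟨x, hx⟩ : ∃ x, (𝒰.map Prod.fst : Filter (ℕ → β)) ≤ 𝓝 x :=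
    ⟨_, (𝒰.map Prod.fst).le_nhds_lim⟩
  have hres : ∀ n, ∀ᶠ z in (𝒰 : Filter ((ℕ → β) × P)), z.2 ∈ A (PiNat.res x n) := by
    intro n
    have hcyl : ∀ᶠ y in 𝓝 x, y ∈ PiNat.cylinder x n :=
      (PiNat.isOpen_cylinder (fun _ => β) x n).mem_nhds (PiNat.self_mem_cylinder x n)
    filter_upwards [h𝒰, hx hcyl] with z hz hzx
    rw [mem_preimage, PiNat.cylinder_eq_res] at hzx
    exact hzx ▸ hz n
  obtain ⟨p, hp⟩ := h𝒮 (𝒰.map Prod.snd) fun n => by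
    obtain ⟨M, hM, hAM⟩ := hsmall (PiNat.res x n) (x n)
    rw [PiNat.res_length] at hM
    exact ⟨M, hM, (hres (n + 1)).mono fun z hz => hAM hz⟩
  refine ⟨(x, p), fun n => (hclosed _).mem_of_tendsto hp (hres n), ?_⟩
  rw [nhds_prod_eq]
  exact Filter.le_prod.2 ⟨hx, hp⟩

theorem exists_mem_branchGraph {β : Type*} (h𝒮 : IsCompleteSequence 𝒮) {A : List β → Set P}
    (hanti : CantorScheme.Antitone A) (hclosed : ∀ l, IsClosed (A l)) (hne : ∀ l, (A l).Nonempty)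
    (hsmall : ∀ l b, ∃ M ∈ 𝒮 l.length, A (b :: l) ⊆ M) (x : ℕ → β) :
    ∃ p, (x, p) ∈ branchGraph A := by
  obtain ⟨p, hp⟩ := h𝒮.nonempty_iInter (F := fun n => A (PiNat.res x n))
    (antitone_nat_of_succ_le fun n => hanti _ _) (fun n => hclosed _) (fun n => hne _) fun n => by
      obtain ⟨M, hM, hAM⟩ := hsmall (PiNat.res x n) (x n)
      rw [PiNat.res_length] at hM
      exact ⟨M, hM, n + 1, hAM⟩
  exact ⟨p, mem_iInter.1 hp⟩

/-- A family of nonempty closed sets such that each member contains, for every `n`, two members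
which are contained in sets of `𝒮 n` and have disjoint images under `h`. These are the large sets
from which a binary tree is grown. -/
structure IsSplittingFamily {Y : Type*} (𝒮 : ℕ → Set (Set P)) (h : P → Y) (𝓛 : Set (Set P)) :
    Prop where
  isClosed : ∀ C ∈ 𝓛, IsClosed C
  nonempty : ∀ C ∈ 𝓛, C.Nonempty
  exists_split : ∀ n, ∀ C ∈ 𝓛, ∃ B : Bool → Set P,
    (∀ b, B b ∈ 𝓛 ∧ B b ⊆ C ∧ ∃ M ∈ 𝒮 n, B b ⊆ M) ∧ Disjoint (h '' B false) (h '' B true)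

theorem IsSplittingFamily.exists_cantorScheme {Y : Type*} {h : P → Y} {𝓛 : Set (Set P)}
    (h𝓛 : IsSplittingFamily 𝒮 h 𝓛) (hne : 𝓛.Nonempty) :
    ∃ A : List Bool → Set P, (∀ l, A l ∈ 𝓛) ∧ CantorScheme.Antitone A ∧
      (∀ l b, ∃ M ∈ 𝒮 l.length, A (b :: l) ⊆ M) ∧ CantorScheme.Disjoint fun l => h '' A l := by
  obtain ⟨C₀, hC₀⟩ := hne
  choose! B hB hdisj using h𝓛.exists_split
  let A : List Bool → Set P := List.rec C₀ fun b l C => B l.length C b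
  have hA : ∀ l, A l ∈ 𝓛 := by
    intro l
    induction l with
    | nil => exact hC₀
    | cons b l ih => exact (hB l.length _ ih b).1
  refine ⟨A, hA, fun l b => (hB l.length _ (hA l) b).2.1,
    fun l b => (hB l.length _ (hA l) b).2.2, fun l a b hab => ?_⟩
  have hl := hdisj l.length _ (hA l)
  cases a <;> cases b
  exacts [absurd rfl hab, hl, hl.symm, absurd rfl hab]

theorem IsSplittingFamily.exists_isCompact_image_eq_univ {Y : Type u} [TopologicalSpace Y]
    (hY : FunctionallyHausdorff Y) {h : P → Y} (hh : Continuous h) (h𝒮 : IsCompleteSequence 𝒮)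
    {𝓛 : Set (Set P)} (h𝓛 : IsSplittingFamily 𝒮 h 𝓛) (hne : 𝓛.Nonempty) :
    ∃ (D : Set P) (φ : Y → unitInterval), IsCompact D ∧ Continuous φ ∧ (φ ∘ h) '' D = Set.univ := by
  obtain ⟨A, hA, hanti, hsmall, hdisj⟩ := h𝓛.exists_cantorScheme hne
  have hclosed : ∀ l, IsClosed (A l) := fun l => h𝓛.isClosed _ (hA l)
  have hG : IsCompact (branchGraph A) := isCompact_branchGraph h𝒮 hclosed hsmall
  have : CompactSpace (branchGraph A) := isCompact_iff_compactSpace.1 hG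
  obtain ⟨c, hc, hcs⟩ := exists_nat_bool_continuous_surjective_of_compact unitInterval
  obtain ⟨φ, hφ, hφc⟩ := hY.exists_continuous_comp_eq
    (π := fun z : branchGraph A => h z.1.2) (f := fun z => c z.1.1) (by fun_prop) (by fun_prop)
    fun z w (hzw : h z.1.2 = h w.1.2) => congrArg c <| eq_of_forall_mem_res hdisj (a := h z.1.2)
      (fun n => mem_image_of_mem h (z.2 n)) fun n => hzw ▸ mem_image_of_mem h (w.2 n)
  refine ⟨Prod.snd '' branchGraph A, φ, hG.image continuous_snd, hφ,
    eq_univ_of_forall fun t => ?_⟩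
  obtain ⟨x, rfl⟩ := hcs t
  obtain ⟨p, hp⟩ := exists_mem_branchGraph h𝒮 hanti hclosed (fun l => h𝓛.nonempty _ (hA l)) hsmall x
  exact ⟨p, ⟨(x, p), hp, rfl⟩, congrFun hφc ⟨(x, p), hp⟩⟩

end Scheme

theorem not_isScatteredSet_iff {X : Type u} [TopologicalSpace X] {S : Set X} :
    ¬ IsScatteredSet S ↔ ∃ T ⊆ S, T.Nonempty ∧ Preperfect T := by
  simp only [IsScatteredSet, preperfect_iff_nhds]
  push Not
  refine exists_congr fun T => and_congr_right fun _ => and_congr_right fun _ =>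
    forall₂_congr fun x hx => ⟨fun hT N hN => ?_, fun hT U hU heq => ?_⟩
  · obtain ⟨U, hUN, hU, hxU⟩ := mem_nhds_iff.1 hN
    by_contra! hcon
    exact hT U hU (Subset.antisymm (fun y hy => hcon y ⟨hUN hy.1, hy.2⟩)
      (singleton_subset_iff.2 ⟨hxU, hx⟩))
  · have hxU : x ∈ U ∩ T := heq ▸ mem_singleton x
    obtain ⟨y, hy, hyx⟩ := hT U (hU.mem_nhds hxU.1)
    exact hyx (heq ▸ hy : y ∈ ({x} : Set X))

theorem exists_preperfect_of_continuous_surjective {K Z : Type u} [TopologicalSpace K]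
    [TopologicalSpace Z] [CompactSpace K] [T2Space Z] [PerfectSpace Z] [Nonempty Z] {f : K → Z}
    (hf : Continuous f) (hsurj : Function.Surjective f) :
    ∃ E : Set K, E.Nonempty ∧ Preperfect E := by
  obtain ⟨E, hEcompact, hE, hmin⟩ := exists_compact_surjective_zorn_subset hf hsurj
  refine ⟨E, image_nonempty.1 (hE ▸ univ_nonempty), preperfect_iff_nhds.2 fun x hx N hN => ?_⟩
  by_contra! hisolated
  let E₀ : Set E := {z | (z : K) ∈ interior N}ᶜ
  have hE₀ : IsClosed E₀ := (isOpen_interior.preimage continuous_subtype_val).isClosed_compl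
  have himage : IsClosed (E.domRestrict f '' E₀) :=
    (hE₀.isCompact.image (hf.comp continuous_subtype_val)).isClosed
  have hcompl : {f x}ᶜ ⊆ E.domRestrict f '' E₀ := by
    intro t ht
    obtain ⟨z, hz, rfl⟩ : t ∈ f '' E := hE ▸ mem_univ t
    exact ⟨⟨z, hz⟩, fun hzN => ht (congrArg f (hisolated z ⟨interior_subset hzN, hz⟩)), rfl⟩
  refine hmin E₀ (fun heq => ?_) hE₀ (himage.closure_eq ▸
    ((dense_compl_singleton (f x)).mono hcompl).closure_eq)
  exact (heq ▸ mem_univ _ : (⟨x, hx⟩ : E) ∈ E₀) (mem_interior_iff_mem_nhds.2 hN)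

theorem not_isScatteredSet_of_image_eq_univ {X : Type u} [TopologicalSpace X] {K : Set X}
    (hK : IsCompact K) {f : X → unitInterval} (hf : Continuous f) (hfK : f '' K = Set.univ) :
    ¬ IsScatteredSet K := by
  have : CompactSpace K := isCompact_iff_compactSpace.1 hK
  have : ConnectedSpace (ULift.{u} unitInterval) :=
    ULift.up_surjective.connectedSpace continuous_uliftUp
  have hsurj : Function.Surjective fun x : K => ULift.up.{u} (f x) := fun t => by
    obtain ⟨x, hx, hxt⟩ : t.down ∈ f '' K := hfK ▸ mem_univ _
    exact ⟨⟨x, hx⟩, congrArg ULift.up hxt⟩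
  obtain ⟨E, hne, hE⟩ := exists_preperfect_of_continuous_surjective
    (continuous_uliftUp.comp (hf.comp continuous_subtype_val)) hsurj
  refine not_isScatteredSet_iff.2 ⟨Subtype.val '' E, Subtype.coe_image_subset K E,
    hne.image _, ?_⟩
  rintro _ ⟨x, hx, rfl⟩
  have := (hE x hx).map continuous_subtype_val.continuousAt Subtype.val_injective
  rwa [Filter.map_principal] at this

theorem isSplittingFamily_perfect {X : Type u} [TopologicalSpace X] [T25Space X]
    (K : Set X) :
    IsSplittingFamily (fun _ => {K}) id {C | Perfect C ∧ C.Nonempty ∧ C ⊆ K} where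
  isClosed _ hC := hC.1.closed
  nonempty _ hC := hC.2.1
  exists_split := by
    rintro - C ⟨hC, hne, hCK⟩
    obtain ⟨C₀, C₁, ⟨hC₀, hne₀, hsub₀⟩, ⟨hC₁, hne₁, hsub₁⟩, hdisj⟩ := hC.splitting hne
    exact ⟨fun b => cond b C₁ C₀, Bool.forall_bool.2
      ⟨⟨⟨hC₀, hne₀, hsub₀.trans hCK⟩, hsub₀, K, rfl, hsub₀.trans hCK⟩,
        ⟨hC₁, hne₁, hsub₁.trans hCK⟩, hsub₁, K, rfl, hsub₁.trans hCK⟩, by simpa⟩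

theorem exists_continuous_surjective_of_not_isScatteredSet {X : Type u} [TopologicalSpace X]
    (hX : FunctionallyHausdorff X) {K : Set X} (hK : IsCompact K) (hs : ¬ IsScatteredSet K) :
    ∃ f : X → unitInterval, Continuous f ∧ Function.Surjective f := by
  have := hX.t25Space
  obtain ⟨T, hTK, hne, hT⟩ := not_isScatteredSet_iff.1 hs
  obtain ⟨D, φ, -, hφ, hD⟩ :=
    (isSplittingFamily_perfect K).exists_isCompact_image_eq_univ hX continuous_id
      (isCompleteSequence_of_isCompact hK)
      ⟨closure T, hT.perfect_closure, hne.closure, closure_minimal hTK hK.isClosed⟩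
  exact ⟨φ, hφ, fun t => by
    obtain ⟨x, -, hx⟩ := hD ▸ mem_univ t
    exact ⟨x, hx⟩⟩

theorem lindelofNumber_mem (P : Type u) [TopologicalSpace P] :
    lindelofNumber P ∈ {κ : Cardinal.{u} | ℵ₀ ≤ κ ∧ ∀ U : Set (Set P), (∀ u ∈ U, IsOpen u) →
      ⋃₀ U = Set.univ → ∃ V ⊆ U, #↥V ≤ κ ∧ ⋃₀ V = Set.univ} :=
  csInf_mem ⟨max ℵ₀ #(Set P), le_max_left _ _, fun U _ hU =>
    ⟨U, subset_rfl, (mk_set_le U).trans (le_max_right _ _), hU⟩⟩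

theorem aleph0_le_lindelofNumber (P : Type u) [TopologicalSpace P] : ℵ₀ ≤ lindelofNumber P :=
  (lindelofNumber_mem P).1

theorem exists_mk_le_lindelofNumber_biUnion_nhds_eq_univ {P : Type u} [TopologicalSpace P]
    {N : P → Set P} (hN : ∀ p, N p ∈ 𝓝 p) :
    ∃ s : Set P, #s ≤ lindelofNumber P ∧ ⋃ p ∈ s, N p = Set.univ := by
  obtain ⟨V, hVN, hV, hcover⟩ := (lindelofNumber_mem P).2 (range fun p => interior (N p))
    (by rintro _ ⟨p, rfl⟩; exact isOpen_interior)
    (eq_univ_of_forall fun p => ⟨_, ⟨p, rfl⟩, mem_interior_iff_mem_nhds.2 (hN p)⟩)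
  choose c hc using fun v : V => hVN v.2
  refine ⟨range c, mk_range_le.trans hV, eq_univ_of_forall fun x => ?_⟩
  obtain ⟨v, hv, hxv⟩ : x ∈ ⋃₀ V := hcover ▸ mem_univ x
  exact mem_biUnion (mem_range_self ⟨v, hv⟩) (interior_subset ((hc ⟨v, hv⟩).ge hxv))

theorem exists_mk_le_pseudocharacter_sInter_eq_singleton {Y : Type u} [TopologicalSpace Y]
    [T1Space Y] (y : Y) :
    ∃ 𝒰 : Set (Set Y), #↥𝒰 ≤ pseudocharacter Y ∧ (∀ U ∈ 𝒰, IsOpen U ∧ y ∈ U) ∧ ⋂₀ 𝒰 = {y} := by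
  have hmem : pseudocharacter Y ∈ {κ : Cardinal.{u} | ℵ₀ ≤ κ ∧ ∀ x : Y, ∃ 𝒰 : Set (Set Y),
      #↥𝒰 ≤ κ ∧ (∀ U ∈ 𝒰, IsOpen U ∧ x ∈ U) ∧ ⋂₀ 𝒰 = ⋂₀ {U : Set Y | IsOpen U ∧ x ∈ U}} :=
    csInf_mem ⟨max ℵ₀ #(Set Y), le_max_left _ _, fun x => ⟨{U | IsOpen U ∧ x ∈ U},
      (mk_set_le _).trans (le_max_right _ _), fun _ h => h, rfl⟩⟩
  obtain ⟨𝒰, hcard, h𝒰, hInter⟩ := hmem.2 y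
  refine ⟨𝒰, hcard, h𝒰, hInter.trans ?_⟩
  simpa only [and_comm, sInter_eq_biInter] using! biInter_basis_nhds (nhds_basis_opens y)

theorem pseudocharacter_le_aleph0 (Y : Type u) [TopologicalSpace Y] [FirstCountableTopology Y] :
    pseudocharacter Y ≤ ℵ₀ := by
  refine csInf_le' ⟨le_rfl, fun x => ?_⟩
  obtain ⟨B, hB⟩ := (𝓝 x).exists_antitone_basis
  have hBx : ∀ U ∈ range fun n => interior (B n), IsOpen U ∧ x ∈ U := by
    rintro _ ⟨n, rfl⟩
    exact ⟨isOpen_interior, mem_interior_iff_mem_nhds.2 (hB.mem n)⟩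
  refine ⟨range fun n => interior (B n), mk_le_aleph0_iff.2 (countable_range _).to_subtype, hBx,
    Subset.antisymm (fun z hz U hU => ?_) (sInter_subset_sInter hBx)⟩
  obtain ⟨n, hn⟩ := hB.mem_iff.1 (hU.1.mem_nhds hU.2)
  exact hn (interior_subset (hz _ ⟨n, rfl⟩))

theorem mk_biUnion_le_of_aleph0_le {α ι : Type u} {κ : Cardinal.{u}} (hκ : ℵ₀ ≤ κ) {s : Set ι}
    (hs : #s ≤ κ) {A : ι → Set α} (hA : ∀ i ∈ s, #(A i) ≤ κ) : #(⋃ i ∈ s, A i) ≤ κ :=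
  calc #(⋃ i ∈ s, A i) ≤ #s * ⨆ i : s, #(A i) := mk_biUnion_le A s
    _ ≤ κ * κ := mul_le_mul' hs (ciSup_le' fun i => hA i i.2)
    _ = κ := mul_eq_self hκ

/-- A point all of whose neighborhoods meet `C` in a set with image of cardinality greater than `κ`.
For `h = id` and `κ = ℵ₀` these are the condensation points of `C`. -/
def IsCondensationPoint {P Y : Type u} [TopologicalSpace P] (κ : Cardinal.{u}) (h : P → Y)
    (C : Set P) (p : P) : Prop :=
  ∀ N ∈ 𝓝 p, κ < #(h '' (C ∩ N))

section Condensation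

variable {P Y : Type u} [TopologicalSpace P] {κ : Cardinal.{u}} {h : P → Y} {C : Set P} {p : P}

theorem IsCondensationPoint.mem_closure (hp : IsCondensationPoint κ h C p) : p ∈ closure C := by
  refine mem_closure_iff_nhds.2 fun N hN => ?_
  have : Nonempty (h '' (C ∩ N)) := mk_ne_zero_iff.1 (zero_le.trans_lt (hp N hN)).ne'
  rw [inter_comm]
  exact image_nonempty.1 (nonempty_coe_sort.1 this)

theorem IsCondensationPoint.mono {C' : Set P} (hp : IsCondensationPoint κ h C p) (hC : C ⊆ C') :
    IsCondensationPoint κ h C' p := fun N hN =>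
  (hp N hN).trans_le (mk_le_mk_of_subset (image_mono (inter_subset_inter_left N hC)))

theorem exists_isCondensationPoint (hl : lindelofNumber P ≤ κ) (hC : κ < #(h '' C)) :
    ∃ p, IsCondensationPoint κ h C p := by
  by_contra! hcon
  unfold IsCondensationPoint at hcon
  push Not at hcon
  choose N hN hle using hcon
  obtain ⟨s, hs, hcover⟩ := exists_mk_le_lindelofNumber_biUnion_nhds_eq_univ hN
  have hunion : h '' C = ⋃ p ∈ s, h '' (C ∩ N p) := by
    rw [← image_iUnion₂, ← inter_iUnion₂, hcover, inter_univ]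
  refine hC.not_ge (hunion ▸ ?_)
  exact mk_biUnion_le_of_aleph0_le ((aleph0_le_lindelofNumber P).trans hl) (hs.trans hl)
    fun p _ => hle p

variable [TopologicalSpace Y]

theorem exists_isCondensationPoint_ne [T1Space Y] (hl : lindelofNumber P ≤ κ)
    (hψ : pseudocharacter Y ≤ κ) (hh : Continuous h) (hC : κ < #(h '' C)) (y : Y) :
    ∃ q, IsCondensationPoint κ h C q ∧ h q ≠ y := by
  have hκ : ℵ₀ ≤ κ := (aleph0_le_lindelofNumber P).trans hl
  obtain ⟨𝒰, h𝒰, hopen, hInter⟩ := exists_mk_le_pseudocharacter_sInter_eq_singleton y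
  obtain ⟨U, hU, hlt⟩ : ∃ U ∈ 𝒰, κ < #(h '' (C ∩ h ⁻¹' Uᶜ)) := by
    by_contra! hle
    have hsub : h '' C ⊆ insert y (⋃ U ∈ 𝒰, h '' (C ∩ h ⁻¹' Uᶜ)) := by
      rintro _ ⟨x, hx, rfl⟩
      refine or_iff_not_imp_left.2 fun hxy => ?_
      obtain ⟨U, hU, hxU⟩ : ∃ U ∈ 𝒰, h x ∉ U := by
        simpa only [mem_sInter, not_forall, exists_prop] using (hInter ▸ hxy : h x ∉ ⋂₀ 𝒰)
      exact mem_biUnion hU ⟨x, ⟨hx, hxU⟩, rfl⟩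
    refine hC.not_ge ((mk_le_mk_of_subset hsub).trans (mk_insert_le.trans ?_))
    exact add_le_of_le hκ (mk_biUnion_le_of_aleph0_le hκ (h𝒰.trans hψ) hle)
      (one_le_aleph0.trans hκ)
  obtain ⟨q, hq⟩ := exists_isCondensationPoint hl hlt
  refine ⟨q, hq.mono inter_subset_left, fun hqy => ?_⟩
  have hqU : q ∈ h ⁻¹' Uᶜ :=
    closure_minimal inter_subset_right ((hopen U hU).1.isClosed_compl.preimage hh) hq.mem_closure
  exact hqU (hqy ▸ (hopen U hU).2)

theorem isSplittingFamily_lt_mk_image [T25Space Y] (hl : lindelofNumber P ≤ κ)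
    (hψ : pseudocharacter Y ≤ κ) (hh : Continuous h) {𝒮 : ℕ → Set (Set P)}
    (h𝒮 : ∀ n p, ∃ M ∈ 𝒮 n, IsClosed M ∧ M ∈ 𝓝 p) :
    IsSplittingFamily 𝒮 h {C | IsClosed C ∧ κ < #(h '' C)} where
  isClosed _ hC := hC.1
  nonempty C hC := image_nonempty.1 (nonempty_coe_sort.1
    (mk_ne_zero_iff.1 (zero_le.trans_lt hC.2).ne'))
  exists_split := by
    rintro n C ⟨hclosed, hC⟩
    obtain ⟨p, hp⟩ := exists_isCondensationPoint hl hC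
    obtain ⟨q, hq, hqp⟩ := exists_isCondensationPoint_ne hl hψ hh hC (h p)
    obtain ⟨s, hs, t, ht, hst⟩ := exists_nhds_disjoint_closure hqp
    have hpiece : ∀ x, IsCondensationPoint κ h C x → ∀ u ∈ 𝓝 (h x), ∃ B : Set P,
        ((IsClosed B ∧ κ < #(h '' B)) ∧ B ⊆ C ∧ ∃ M ∈ 𝒮 n, B ⊆ M) ∧ h '' B ⊆ closure u := by
      intro x hx u hu
      obtain ⟨M, hM, hMclosed, hMx⟩ := h𝒮 n x
      refine ⟨C ∩ (M ∩ h ⁻¹' closure u), ⟨⟨?_, hx _ ?_⟩, inter_subset_left, M, hM, ?_⟩, ?_⟩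
      · exact hclosed.inter (hMclosed.inter (isClosed_closure.preimage hh))
      · exact Filter.inter_mem hMx (hh.continuousAt (Filter.mem_of_superset hu subset_closure))
      · exact fun y hy => hy.2.1
      · exact image_subset_iff.2 fun y hy => hy.2.2
    obtain ⟨B₀, hB₀, hs₀⟩ := hpiece q hq s hs
    obtain ⟨B₁, hB₁, ht₁⟩ := hpiece p hp t ht
    exact ⟨fun b => cond b B₁ B₀, Bool.forall_bool.2 ⟨hB₀, hB₁⟩, hst.mono hs₀ ht₁⟩

end Condensation

theorem IsCechComplete.exists_isCompact_image_eq_univ {P Y : Type u} [TopologicalSpace P]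
    [TopologicalSpace Y] (hP : IsCechComplete P) (hY : FunctionallyHausdorff Y) {h : P → Y}
    (hh : Continuous h) (hlt : max (lindelofNumber P) (pseudocharacter Y) < #(range h)) :
    ∃ (D : Set P) (φ : Y → unitInterval), IsCompact D ∧ Continuous φ ∧ (φ ∘ h) '' D = Set.univ := by
  have := hY.t25Space
  obtain ⟨𝒮, h𝒮, hcover⟩ := hP.exists_isCompleteSequence
  exact (isSplittingFamily_lt_mk_image (le_max_left _ _) (le_max_right _ _) hh
    hcover).exists_isCompact_image_eq_univ hY hh h𝒮 ⟨Set.univ, isClosed_univ, image_univ ▸ hlt⟩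

theorem mk_uLift_unitInterval : #(ULift.{u} unitInterval) = 𝔠 := by
  rw [mk_uLift, mk_Icc_real zero_lt_one, lift_continuum]

theorem stmt1 {X P : Type u} [TopologicalSpace X] [TopologicalSpace P]
    (hX : FunctionallyHausdorff X) (hP : IsCechComplete P)
    (g : P → X) (hg : Continuous g) (hgs : Function.Surjective g)
    (hl : lindelofNumber P < Cardinal.continuum) :
    List.TFAE
      [ ∀ K : Set X, IsCompact K → IsScatteredSet K,
        ∀ (Y : Type u) (_ : TopologicalSpace Y), FunctionallyHausdorff Y →
          ∀ f : X → Y, Continuous f →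
            #↥(Set.range f) ≤ max (lindelofNumber P) (pseudocharacter Y),
        ¬ ∃ f : X → unitInterval, Continuous f ∧ Function.Surjective f ] := by
  tfae_have 1 → 2 := by
    intro hscattered Y _ hY f hf
    by_contra! hlt
    rw [← hgs.range_comp f] at hlt
    obtain ⟨D, φ, hD, hφ, himage⟩ := hP.exists_isCompact_image_eq_univ hY (hf.comp hg) hlt
    refine not_isScatteredSet_of_image_eq_univ (hD.image hg) (hφ.comp hf) ?_
      (hscattered _ (hD.image hg))
    rw [← image_comp, Function.comp_assoc, himage]
  tfae_have 2 → 3 := by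
    rintro hcard ⟨f, hf, hfs⟩
    have hle := hcard (ULift.{u} unitInterval) inferInstance (.of_t35Space _) (ULift.up ∘ f)
      (continuous_uliftUp.comp hf)
    rw [(ULift.up_surjective.comp hfs).range_eq, mk_univ, mk_uLift_unitInterval] at hle
    exact hle.not_gt (max_lt hl ((pseudocharacter_le_aleph0 _).trans_lt aleph0_lt_continuum))
  tfae_have 3 → 1 := by
    intro hsurj K hK
    by_contra hs
    exact hsurj (exists_continuous_surjective_of_not_isScatteredSet hX hK hs)
  tfae_finish
end

section
/- Assume ω₁ = 𝔟. Then there exists an uncountable Hausdorff topological space X with a unique non-isolated point such that X is K-analytic and every compact subset of X is at most countable. -/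
open Cardinal Set Topology

universe u

/-! Well-order an unbounded family in `ℕ → ℕ` in type `𝔟` and let `y i` lie above its `i`-th member
and eventually dominate all earlier ones: then every `α : ℕ → ℕ` lies above fewer than `𝔟` of the
`y i`. Add to the discrete index set a point `∞`, with the finest topology for which
`α ↦ {∞} ∪ {i | y i ≤ α}` is an upper semicontinuous compact-valued map. The graph of this map is
closed in the product of the Baire space with the one-point compactification of the index set, hence
Lindelöf and Čech-complete, and it projects onto the new space. If a compact set contained `𝔟` many
`i`, then some coordinate `k` would take infinitely many values `y i k` on it. Choosing one `i` for
each value gives an infinite set which does not accumulate at `∞`, because only finitely many of its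
members satisfy `y i k ≤ α k` for a given `α`. -/

open Filter

section BoundingNumber

theorem infinite_setOf_not_le_iff {X : Type*} [LE X] {x y : ℕ → X} :
    {n | ¬ x n ≤ y n}.Infinite ↔ ¬ x ≤ᶠ[atTop] y :=
  Nat.frequently_atTop_iff_infinite.symm.trans not_eventually.symm

theorem exists_mk_eq_boundingNumber_forall_not_eventuallyLE :
    ∃ (I : Type) (b : I → ℕ → ℕ), #I = boundingNumber ∧ ∀ α, ∃ i, ¬ b i ≤ᶠ[atTop] α := by
  obtain ⟨B, hB, hunbounded⟩ := csInf_mem (s := {κ : Cardinal.{0} | ∃ B : Set (ℕ → ℕ),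
      #B = κ ∧ ∀ y : ℕ → ℕ, ∃ x ∈ B, {n : ℕ | ¬ x n ≤ y n}.Infinite})
    ⟨_, Set.univ, rfl, fun y => ⟨y + 1, mem_univ _, by simp [infinite_univ]⟩⟩
  refine ⟨B, Subtype.val, hB, fun α => ?_⟩
  obtain ⟨x, hxB, hx⟩ := hunbounded α
  exact ⟨⟨x, hxB⟩, infinite_setOf_not_le_iff.1 hx⟩

theorem exists_forall_eventuallyLE_of_countable {ι X : Type*} [Countable ι] [SemilatticeSup X]
    [OrderBot X] (b : ι → ℕ → X) : ∃ α, ∀ i, b i ≤ᶠ[atTop] α := by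
  obtain ⟨f, hf⟩ := exists_injective_nat ι
  have finite_le (n : ℕ) : {i | f i ≤ n}.Finite := (finite_Iic n).preimage hf.injOn
  refine ⟨fun n => (finite_le n).toFinset.sup (b · n), fun i => ?_⟩
  filter_upwards [eventually_ge_atTop (f i)] with n hn
  exact Finset.le_sup (f := (b · n)) ((finite_le n).mem_toFinset.2 hn)

theorem aleph0_lt_boundingNumber : ℵ₀ < boundingNumber := by
  obtain ⟨I, b, hI, hunbounded⟩ := exists_mk_eq_boundingNumber_forall_not_eventuallyLE
  rw [← hI, aleph0_lt_mk_iff, ← not_countable_iff]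
  intro hcountable
  obtain ⟨α, hα⟩ := exists_forall_eventuallyLE_of_countable b
  obtain ⟨i, hi⟩ := hunbounded α
  exact hi (hα i)

theorem exists_forall_eventuallyLE_of_mk_lt_boundingNumber {I : Type} (b : I → ℕ → ℕ)
    (hI : #I < boundingNumber) : ∃ α, ∀ i, b i ≤ᶠ[atTop] α := by
  by_contra! hunbounded
  refine notMem_of_lt_csInf' (mk_range_le.trans_lt hI) ⟨range b, rfl, fun α => ?_⟩
  obtain ⟨i, hi⟩ := hunbounded α
  exact ⟨b i, mem_range_self i, infinite_setOf_not_le_iff.2 hi⟩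

theorem exists_family_mk_setOf_le_lt_boundingNumber :
    ∃ (I : Type) (y : I → ℕ → ℕ), #I = boundingNumber ∧
      ∀ α, #{i | y i ≤ α} < boundingNumber := by
  obtain ⟨I, b, hI, hunbounded⟩ := exists_mk_eq_boundingNumber_forall_not_eventuallyLE
  obtain ⟨_, _, hord⟩ := exists_ord_eq_type_lt I
  have mk_Iio_lt_boundingNumber (i : I) : #(Iio i) < boundingNumber := hI ▸ mk_Iio_lt i hord
  choose z hz using fun i => exists_forall_eventuallyLE_of_mk_lt_boundingNumber
    (fun j : Iio i => b j) (mk_Iio_lt_boundingNumber i)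
  refine ⟨I, fun i => b i ⊔ z i, hI, fun α => ?_⟩
  obtain ⟨j, hj⟩ := hunbounded α
  refine (mk_le_mk_of_subset fun i hi => ?_).trans_lt (mk_Iio_lt_boundingNumber j)
  obtain ⟨hbα, hzα⟩ : b i ≤ α ∧ z i ≤ α := sup_le_iff.1 hi
  by_contra hij
  rcases (not_lt.1 hij).eq_or_lt with rfl | hji
  · exact hj (.of_forall hbα)
  · exact hj ((hz i ⟨j, hji⟩).trans (.of_forall hzα))

end BoundingNumber

section CechComplete

universe v w

theorem IsCechComplete.of_isEmbedding {X K : Type u} [TopologicalSpace X] [TopologicalSpace K]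
    [CompactSpace K] [T2Space K] {e : X → K} (he : IsEmbedding e) {G : Set K} (hG : IsGδ G)
    (hrange : range e = closure (range e) ∩ G) : IsCechComplete X := by
  have mem_closure (x : X) : e x ∈ closure (range e) := subset_closure (mem_range_self x)
  refine ⟨closure (range e), inferInstance, codRestrict e _ mem_closure,
    isCompact_iff_compactSpace.1 isClosed_closure.isCompact, inferInstance,
    he.codRestrict _ _, ?_, ?_⟩
  · refine IsEmbedding.subtypeVal.isInducing.dense_iff.2 fun z => ?_
    rw [← range_comp]
    exact z.2
  · have range_eq : range (codRestrict e _ mem_closure) = Subtype.val ⁻¹' G := by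
      ext z
      rw [range_codRestrict]
      exact (Set.ext_iff.1 hrange z).trans (and_iff_right z.2)
    rw [range_eq]
    exact hG.preimage continuous_subtype_val

theorem IsCechComplete.of_locallyCompactSpace (X : Type u) [TopologicalSpace X]
    [LocallyCompactSpace X] [T2Space X] : IsCechComplete X :=
  .of_isEmbedding OnePoint.isOpenEmbedding_coe.isEmbedding OnePoint.isOpen_range_coe.isGδ
    (inter_eq_right.2 subset_closure).symm

theorem IsCechComplete.of_isClosedEmbedding {P X : Type u} [TopologicalSpace P]
    [TopologicalSpace X] (hX : IsCechComplete X) {g : P → X} (hg : IsClosedEmbedding g) :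
    IsCechComplete P := by
  obtain ⟨K, _, e, _, _, he, -, hGδ⟩ := hX
  refine .of_isEmbedding (he.comp hg.isEmbedding) hGδ ?_
  rw [range_comp, ← image_preimage_eq_inter_range,
    ← he.isInducing.closure_eq_preimage_closure_image, hg.isClosed_range.closure_eq]

theorem IsCechComplete.prod {X : Type v} {Y : Type w} [TopologicalSpace X] [TopologicalSpace Y]
    (hX : IsCechComplete X) (hY : IsCechComplete Y) : IsCechComplete (X × Y) := by
  obtain ⟨K, _, e, _, _, he, hdense, hGδ⟩ := hX
  obtain ⟨L, _, e', _, _, he', hdense', hGδ'⟩ := hY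
  refine ⟨K × L, inferInstance, Prod.map e e', inferInstance, inferInstance, he.prodMap he',
    hdense.prodMap hdense', ?_⟩
  rw [range_prodMap, Set.prod_eq]
  exact (hGδ.preimage continuous_fst).inter (hGδ'.preimage continuous_snd)

theorem IsCechComplete.pi {ι : Type v} [Countable ι] {X : ι → Type w}
    [∀ i, TopologicalSpace (X i)] (hX : ∀ i, IsCechComplete (X i)) :
    IsCechComplete (∀ i, X i) := by
  choose K _ e _ _ he hdense hGδ using hX
  refine ⟨∀ i, K i, inferInstance, Pi.map e, inferInstance, inferInstance, .piMap he,
    .piMap hdense, ?_⟩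
  rw [range_piMap, Set.pi_def]
  exact .biInter (to_countable _) fun i _ => (hGδ i).preimage (continuous_apply i)

theorem lindelofSpace_of_isProperMap {X Y : Type*} [TopologicalSpace X] [TopologicalSpace Y]
    [LindelofSpace Y] {f : X → Y} (hf : IsProperMap f) : LindelofSpace X := by
  refine ⟨fun F _ _ _ => ?_⟩
  obtain ⟨y, hy⟩ := cluster_point_of_Lindelof (map f F)
  obtain ⟨x, -, hx⟩ := hf.clusterPt_of_mapClusterPt hy
  exact ⟨x, mem_univ x, hx⟩

theorem IsKAnalytic.of_isClosed_prod {Y : Type v} {K : Type w} {X : Type max v w}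
    [TopologicalSpace Y] [TopologicalSpace K] [TopologicalSpace X] [LindelofSpace Y]
    [CompactSpace K] [T2Space K] (hY : IsCechComplete Y) {P : Set (Y × K)} (hP : IsClosed P)
    {f : P → X} (hf : Continuous f) (hsurj : Function.Surjective f) : IsKAnalytic X :=
  ⟨P, inferInstance, f,
    lindelofSpace_of_isProperMap (isProperMap_fst_of_compactSpace.comp hP.isProperMap_subtypeVal),
    (hY.prod (.of_locallyCompactSpace K)).of_isClosedEmbedding hP.isClosedEmbedding_subtypeVal,
    hf, hsurj⟩

end CechComplete

/-- The space obtained from the discrete space `I` by adding one point `infty`, whose punctured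
neighbourhoods are the members of `F`. -/
inductive AdjoinPoint {I : Type u} (F : Filter I) : Type u
  | of (i : I)
  | infty

namespace AdjoinPoint

variable {I : Type u} {F : Filter I}

theorem of_injective : Function.Injective (of : I → AdjoinPoint F) := fun _ _ => of.inj

theorem mk_eq [Infinite I] : #(AdjoinPoint F) = #I := by
  refine le_antisymm ?_ (mk_le_of_injective of_injective)
  rw [← add_one_eq (aleph0_le_mk I), ← mk_option]
  refine mk_le_of_surjective (f := fun x => x.elim infty of) ?_
  rintro (i | _)
  · exact ⟨some i, rfl⟩
  · exact ⟨none, rfl⟩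

instance : TopologicalSpace (AdjoinPoint F) := nhdsAdjoint infty (map of F)

theorem nhds_of (i : I) : 𝓝 (of i : AdjoinPoint F) = pure (of i) :=
  nhds_nhdsAdjoint_of_ne _ nofun

theorem mem_nhds_infty {U : Set (AdjoinPoint F)} :
    U ∈ 𝓝 infty ↔ infty ∈ U ∧ of ⁻¹' U ∈ F := by
  rw [nhds_nhdsAdjoint_same, mem_sup, mem_pure, mem_map]

theorem nhdsNE_of (i : I) : 𝓝[≠] (of i : AdjoinPoint F) = ⊥ :=
  (isOpen_singleton_iff_punctured_nhds _).1 (isOpen_singleton_nhdsAdjoint _ nofun)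

theorem nhdsNE_infty : 𝓝[≠] (infty : AdjoinPoint F) = map of F := by
  ext U
  rw [← insert_mem_nhds_iff, mem_nhds_infty, mem_map]
  simp only [mem_insert_iff, true_or, true_and, preimage, reduceCtorEq, false_or]

theorem t2Space (hF : F ≤ cofinite) : T2Space (AdjoinPoint F) := by
  have disjoint_infty (i : I) : Disjoint (𝓝 (of i : AdjoinPoint F)) (𝓝 infty) := by
    rw [nhds_of, ← principal_singleton, disjoint_principal_left, mem_nhds_infty]
    refine ⟨nofun, mem_of_superset (hF (finite_singleton i).compl_mem_cofinite) ?_⟩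
    exact fun j hji h => hji (of_injective h)
  refine t2Space_iff_disjoint_nhds.2 fun x y hxy => ?_
  cases x with
  | of i =>
    cases y with
    | of j => simpa only [nhds_of, disjoint_pure_pure] using hxy
    | infty => exact disjoint_infty i
  | infty =>
    cases y with
    | of j => exact (disjoint_infty j).symm
    | infty => exact (hxy rfl).elim

theorem existsUnique_not_isOpen_singleton [F.NeBot] :
    ∃! x : AdjoinPoint F, ¬ IsOpen {x} := by
  refine ⟨infty, ?_, ?_⟩ <;> simp only [isOpen_singleton_iff_punctured_nhds]
  · rw [nhdsNE_infty]
    exact NeBot.ne inferInstance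
  · rintro (i | _) h
    · exact (h (nhdsNE_of i)).elim
    · rfl

theorem finite_of_isCompact {K : Set (AdjoinPoint F)} (hK : IsCompact K) {J : Set I}
    (hJF : Jᶜ ∈ F) (hJK : of '' J ⊆ K) : J.Finite := by
  by_contra hJ
  obtain ⟨x, -, hx⟩ :=
    (Set.Infinite.image of_injective.injOn hJ).exists_accPt_of_subset_isCompact hK hJK
  refine hx.ne ?_
  cases x with
  | of i => rw [nhdsNE_of, bot_inf_eq]
  | infty =>
    rw [nhdsNE_infty, ← map_principal, ← map_inf of_injective, map_eq_bot_iff]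
    exact inf_principal_eq_bot.2 hJF

theorem mk_lt_of_isCompact {κ : Cardinal.{u}} (hκ : ℵ₀ ≤ κ)
    (hF : ∀ A : Set I, κ ≤ #A → ∃ J ⊆ A, J.Infinite ∧ Jᶜ ∈ F)
    {K : Set (AdjoinPoint F)} (hK : IsCompact K) : #K < κ := by
  have mk_preimage_lt : #(of ⁻¹' K) < κ := by
    by_contra! hle
    obtain ⟨J, hJK, hinf, hJF⟩ := hF _ hle
    exact hinf (finite_of_isCompact hK hJF (image_subset_iff.2 hJK))
  have subset_insert : K ⊆ insert infty (of '' (of ⁻¹' K)) := by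
    rintro (i | _) hi
    · exact .inr (mem_image_of_mem of hi)
    · exact .inl rfl
  calc #K ≤ #(of '' (of ⁻¹' K)) + 1 := (mk_le_mk_of_subset subset_insert).trans mk_insert_le
    _ ≤ #(of ⁻¹' K) + 1 := by gcongr; exact mk_image_le
    _ < κ := add_lt_of_lt hκ mk_preimage_lt (one_lt_aleph0.trans_le hκ)

end AdjoinPoint

section BoundedFilter

variable {I : Type u} (y : I → ℕ → ℕ)

/-- The indices of the functions bounded by `α` on `{0, …, n - 1}`. -/
def boundedBefore (α : ℕ → ℕ) (n : ℕ) : Set I := {i | ∀ k < n, y i k ≤ α k}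

/-- The filter of punctured neighbourhoods of `∞` in the finest topology on `I ∪ {∞}`, with `I`
discrete, for which `α ↦ {∞} ∪ {i | y i ≤ α}` is upper semicontinuous with compact values. -/
def boundedFilter : Filter I := ⨆ α, ⨅ n, cofinite ⊓ 𝓟 (boundedBefore y α n)

variable {y}

theorem boundedBefore_antitone (α : ℕ → ℕ) : Antitone (boundedBefore y α) :=
  fun _ _ hmn _ hi k hk => hi k (hk.trans_le hmn)

theorem mem_boundedFilter {U : Set I} :
    U ∈ boundedFilter y ↔ ∀ α, ∃ n, (boundedBefore y α n \ U).Finite := by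
  have hdir (α : ℕ → ℕ) : Directed (· ≥ ·) fun n => cofinite ⊓ 𝓟 (boundedBefore y α n) :=
    directed_of_isDirected_le fun _ _ hmn =>
      inf_le_inf_left _ (principal_mono.2 (boundedBefore_antitone α hmn))
  simp only [boundedFilter, mem_iSup, mem_iInf_of_directed (hdir _), mem_inf_principal',
    mem_cofinite, compl_union, compl_compl, sdiff_eq]

theorem boundedFilter_le_cofinite : boundedFilter y ≤ cofinite :=
  iSup_le fun _ => iInf_le_of_le 0 inf_le_left

theorem setOf_forall_mem_le_mem_nhds {ι X : Type*} [Preorder X] [TopologicalSpace X]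
    [DiscreteTopology X] (α : ι → X) {s : Set ι} (hs : s.Finite) :
    {β | ∀ k ∈ s, β k ≤ α k} ∈ 𝓝 α :=
  (eventually_all_finite hs).2 fun k _ =>
    (continuous_apply k).continuousAt (mem_nhds_discrete.2 self_mem_Iic)

theorem cocountable_le_boundedFilter : cocountable ≤ boundedFilter y := by
  intro U hU
  choose n hn using mem_boundedFilter.1 hU
  obtain ⟨S, hS, hcover⟩ :=
    TopologicalSpace.countable_cover_nhds fun α => setOf_forall_mem_le_mem_nhds α (finite_Iio (n α))
  refine mem_cocountable.2 ((hS.biUnion fun α _ => (hn α).countable).mono fun i hi => ?_)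
  obtain ⟨α, hα, hiα⟩ := mem_iUnion₂.1 (hcover.symm ▸ mem_univ (y i))
  exact mem_biUnion hα ⟨hiα, hi⟩

theorem boundedFilter_neBot [Uncountable I] : (boundedFilter y).NeBot := by
  refine neBot_iff.2 fun hbot => not_countable_univ (α := I) ?_
  have : (∅ : Set I) ∈ cocountable := cocountable_le_boundedFilter (hbot ▸ mem_bot)
  simpa only [mem_cocountable, compl_empty] using this

theorem compl_mem_boundedFilter_of_injOn {J : Set I} {k : ℕ} (hJ : InjOn (y · k) J) :
    Jᶜ ∈ boundedFilter y := by
  refine mem_boundedFilter.2 fun α => ⟨k + 1, ?_⟩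
  rw [sdiff_compl]
  exact .of_finite_image ((finite_Iic (α k)).subset
    (image_subset_iff.2 fun i hi => hi.1 k k.lt_succ_self)) (hJ.mono inter_subset_right)

theorem exists_infinite_compl_mem_boundedFilter {A : Set I} (hA : ∀ α, ¬ A ⊆ {i | y i ≤ α}) :
    ∃ J ⊆ A, J.Infinite ∧ Jᶜ ∈ boundedFilter y := by
  obtain ⟨k, hk⟩ : ∃ k, ((y · k) '' A).Infinite := by
    by_contra! hfin
    choose α hα using fun k => (hfin k).bddAbove
    exact hA α fun i hi k => hα k (mem_image_of_mem _ hi)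
  obtain ⟨J, hJA, hJ⟩ := (surjOn_image (y · k) A).exists_bijOn_subset
  exact ⟨J, hJA, .of_image _ (hJ.image_eq.symm ▸ hk), compl_mem_boundedFilter_of_injOn hJ.injOn⟩

variable (y)

/-- The graph of the set-valued map `α ↦ {∞} ∪ {i | y i ≤ α}`. -/
def boundedGraph : Set ((ℕ → ℕ) × OnePoint I) := {p | ∀ i : I, p.2 = i → y i ≤ p.1}

variable {y}

theorem isClosed_boundedGraph [TopologicalSpace I] [DiscreteTopology I] :
    IsClosed (boundedGraph y) := by
  have isOpen_singleton_coe (i : I) : IsOpen {(i : OnePoint I)} := by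
    rw [isOpen_singleton_iff_nhds_eq_pure, OnePoint.nhds_coe_eq, nhds_discrete, map_pure]
  simp only [boundedGraph, ofPred_forall, imp_iff_not_or, ofPred_or]
  exact isClosed_iInter fun i => .union
    ((isOpen_singleton_coe i).preimage continuous_snd).isClosed_compl
    (isClosed_le continuous_const continuous_fst)

theorem continuous_boundedGraph_elim [TopologicalSpace I] [DiscreteTopology I] :
    Continuous fun p : boundedGraph y =>
      (p.1.2.elim .infty .of : AdjoinPoint (boundedFilter y)) := by
  refine continuous_iff_continuousAt.2 ?_
  rintro ⟨⟨α, x⟩, hx⟩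
  induction x using OnePoint.rec with
  | coe i =>
    have continuousAt_elim : ContinuousAt
        (fun x : OnePoint I => (x.elim .infty .of : AdjoinPoint (boundedFilter y))) i :=
      OnePoint.continuousAt_coe.2 continuous_of_discreteTopology.continuousAt
    exact ContinuousAt.comp (x := (⟨(α, i), hx⟩ : boundedGraph y)) continuousAt_elim
      (continuous_snd.comp continuous_subtype_val).continuousAt
  | infty =>
    intro U hU
    obtain ⟨hinfty, hUF⟩ := AdjoinPoint.mem_nhds_infty.1 hU
    obtain ⟨n, hn⟩ := mem_boundedFilter.1 hUF α
    have bounded_mem_nhds : {β : ℕ → ℕ | ∀ k < n, β k ≤ α k} ∈ 𝓝 α :=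
      setOf_forall_mem_le_mem_nhds α (finite_Iio n)
    have compl_mem_nhds :
        ((↑) '' (boundedBefore y α n \ AdjoinPoint.of ⁻¹' U))ᶜ ∈
          𝓝 (OnePoint.infty : OnePoint I) :=
      (OnePoint.isOpen_compl_image_coe.2 ⟨isClosed_discrete _, hn.isCompact⟩).mem_nhds
        (by simp)
    refine mem_map.2 <| mem_of_superset (continuous_subtype_val.continuousAt
      (prod_mem_nhds bounded_mem_nhds compl_mem_nhds)) ?_
    rintro ⟨⟨β, x⟩, hβx⟩ ⟨hβ, hx⟩
    induction x using OnePoint.rec with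
    | infty => exact hinfty
    | coe i =>
      by_contra hiU
      exact hx ⟨i, ⟨fun k hk => (hβx i rfl k).trans (hβ k hk), hiU⟩, rfl⟩

theorem isKAnalytic_adjoinPoint_boundedFilter : IsKAnalytic (AdjoinPoint (boundedFilter y)) := by
  let _ : TopologicalSpace I := ⊥
  have : DiscreteTopology I := ⟨rfl⟩
  refine .of_isClosed_prod (.pi fun _ => .of_locallyCompactSpace ℕ) isClosed_boundedGraph
    continuous_boundedGraph_elim ?_
  rintro (i | _)
  · exact ⟨⟨(y i, i), fun j hij => (OnePoint.coe_injective hij) ▸ le_rfl⟩, rfl⟩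
  · exact ⟨⟨(0, OnePoint.infty), fun i hi => (OnePoint.infty_ne_coe i hi).elim⟩, rfl⟩

end BoundedFilter

theorem stmt9_general :
    ∃ (X : Type) (_ : TopologicalSpace X), T2Space X ∧ #X = boundingNumber ∧
      (∃! x : X, ¬ IsOpen ({x} : Set X)) ∧ IsKAnalytic X ∧
      ∀ K : Set X, IsCompact K → #K < boundingNumber := by
  obtain ⟨I, y, hI, hy⟩ := exists_family_mk_setOf_le_lt_boundingNumber
  have : Uncountable I := aleph0_lt_mk_iff.1 (hI ▸ aleph0_lt_boundingNumber)
  have := boundedFilter_neBot (y := y)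
  refine ⟨AdjoinPoint (boundedFilter y), inferInstance,
    AdjoinPoint.t2Space boundedFilter_le_cofinite, AdjoinPoint.mk_eq.trans hI,
    AdjoinPoint.existsUnique_not_isOpen_singleton, isKAnalytic_adjoinPoint_boundedFilter,
    fun _ => AdjoinPoint.mk_lt_of_isCompact aleph0_lt_boundingNumber.le fun A hA => ?_⟩
  exact exists_infinite_compl_mem_boundedFilter fun α hAα =>
    ((mk_le_mk_of_subset hAα).trans_lt (hy α)).not_ge hA

theorem stmt9 (hb : Cardinal.aleph 1 = boundingNumber) :
    ∃ (X : Type) (_ : TopologicalSpace X), T2Space X ∧ ¬ Countable X ∧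
      (∃! x : X, ¬ IsOpen ({x} : Set X)) ∧ IsKAnalytic X ∧
      ∀ K : Set X, IsCompact K → K.Countable := by
  obtain ⟨X, _, hT2, hX, hpoint, hKX, hcompact⟩ := stmt9_general
  simp only [← hb, lt_aleph_one_iff, le_aleph0_iff_set_countable] at hX hcompact
  have uncountable : ¬ Countable X := by
    rw [← mk_le_aleph0_iff, hX, not_le]
    exact aleph0_lt_aleph_one
  exact ⟨X, _, hT2, uncountable, hpoint, hKX, hcompact⟩
end
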